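/- Let y ∈ ℂ with Re(y) > 0 and let c > 1. Then Σ_{n=1}^∞ d(n) log(n) e^{−ny} = −2 · (1/(2πi)) ∫_{(c)} Γ(s) ζ(s) ζ'(s) y^{−s} ds. -/

import Mathlib

open Filter Topology MeasureTheory

noncomputable def eulerGamma : ℝ := Real.eulerMascheroniConstant

noncomputable def gamma1 : ℝ :=
  limUnder atTop (fun n : ℕ => ∑ j ∈ Finset.Icc 1 n, Real.log j / j - (Real.log n) ^ 2 / 2)

lemma aux_real_int {a r : ℝ} (ha : 0 < a) (hr : 0 < r) :
    IntegrableOn (fun t : ℝ => t ^ (a - 1) * Real.exp (-r * t)) (Set.Ioi 0) := by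
  have := integrableOn_rpow_mul_exp_neg_mul_rpow (p := 1) (s := a - 1) (b := r)
    (by linarith) one_pos hr
  simpa using this

lemma aux_norm {s y : ℂ} {t : ℝ} (ht : 0 < t) :
    ‖(t : ℂ) ^ (s - 1) * Complex.exp (-(y * t))‖ = t ^ (s.re - 1) * Real.exp (-y.re * t) := by
  rw [norm_mul, Complex.norm_cpow_eq_rpow_re_of_pos ht, Complex.norm_exp]
  simp

lemma aux_meas (s y : ℂ) : AEStronglyMeasurable
    (fun t : ℝ => (t : ℂ) ^ (s - 1) * Complex.exp (-(y * t)))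
    (volume.restrict (Set.Ioi 0)) := by
  apply ContinuousOn.aestronglyMeasurable _ measurableSet_Ioi
  apply ContinuousOn.mul
  · intro t ht
    exact (Complex.continuousAt_ofReal_cpow_const t (s - 1) (Or.inr (ne_of_gt ht))).continuousWithinAt
  · fun_prop

lemma aux_int {s y : ℂ} (hs : 0 < s.re) (hy : 0 < y.re) :
    IntegrableOn (fun t : ℝ => (t : ℂ) ^ (s - 1) * Complex.exp (-(y * t))) (Set.Ioi 0) := by
  refine (aux_real_int hs hy).mono' (aux_meas s y) ?_
  filter_upwards [ae_restrict_mem measurableSet_Ioi] with t ht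
  exact (aux_norm ht).le

lemma aux_deriv {s y : ℂ} (hs : 0 < s.re) (hy : 0 < y.re) :
    DifferentiableAt ℂ
      (fun y : ℂ => ∫ t : ℝ in Set.Ioi 0, (t : ℂ) ^ (s - 1) * Complex.exp (-(y * t))) y := by
  have key := hasDerivAt_integral_of_dominated_loc_of_deriv_le
    (μ := volume.restrict (Set.Ioi 0))
    (F := fun (y : ℂ) (t : ℝ) => (t : ℂ) ^ (s - 1) * Complex.exp (-(y * t)))
    (F' := fun (y : ℂ) (t : ℝ) => (t : ℂ) ^ (s - 1) * (Complex.exp (-(y * t)) * (-t)))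
    (bound := fun t => t ^ ((s.re + 1) - 1) * Real.exp (-(y.re / 2) * t))
    (x₀ := y) (s := {z : ℂ | y.re / 2 < z.re}) ?_ ?_ ?_ ?_ ?_ ?_ ?_
  · exact key.2.differentiableAt
  · exact (isOpen_lt continuous_const Complex.continuous_re).mem_nhds (by simp; linarith)
  · exact Eventually.of_forall fun z => aux_meas s z
  · exact aux_int hs hy
  · have h := (aux_meas s y).mul (g := fun t : ℝ => -(t : ℂ))
      (by fun_prop)
    refine h.congr (Eventually.of_forall fun t => ?_)
    simp [mul_assoc]
  · filter_upwards [ae_restrict_mem measurableSet_Ioi] with t ht z hz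
    have ht' : 0 < t := ht
    rw [← mul_assoc, norm_mul, aux_norm ht', norm_neg, Complex.norm_real, Real.norm_of_nonneg ht'.le]
    have : t ^ (s.re + 1 - 1) = t ^ (s.re - 1) * t := by
      rw [show s.re + 1 - 1 = (s.re - 1) + 1 by ring, Real.rpow_add_one ht'.ne']
    rw [this, mul_right_comm]
    have hz' : y.re / 2 < z.re := hz
    gcongr
  · exact aux_real_int (by linarith) (by linarith)
  · refine Eventually.of_forall fun t z _ => ?_
    have h1 : HasDerivAt (fun z : ℂ => -(z * t)) (-(t : ℂ)) z := by
      simpa using ((hasDerivAt_id' z).mul_const (t : ℂ)).fun_neg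
    exact (h1.cexp).const_mul _

lemma aux_mellin {s y : ℂ} (hs : 0 < s.re) (hy : 0 < y.re) :
    ∫ t : ℝ in Set.Ioi 0, (t : ℂ) ^ (s - 1) * Complex.exp (-(y * t)) =
      Complex.Gamma s * y ^ (-s) := by
  have hU : IsOpen {z : ℂ | 0 < z.re} := isOpen_lt continuous_const Complex.continuous_re
  have hf : AnalyticOnNhd ℂ (fun y : ℂ => ∫ t : ℝ in Set.Ioi 0,
      (t : ℂ) ^ (s - 1) * Complex.exp (-(y * t))) {z : ℂ | 0 < z.re} :=
    DifferentiableOn.analyticOnNhd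
      (fun z hz => (aux_deriv hs hz).differentiableWithinAt) hU
  have hg : AnalyticOnNhd ℂ (fun y : ℂ => Complex.Gamma s * y ^ (-s)) {z : ℂ | 0 < z.re} := by
    refine DifferentiableOn.analyticOnNhd (fun z hz => ?_) hU
    have : z ∈ Complex.slitPlane := Or.inl hz
    exact ((differentiableAt_id.cpow_const this).const_mul _).differentiableWithinAt
  have hpre : IsPreconnected {z : ℂ | 0 < z.re} := (convex_halfSpace_re_gt 0).isPreconnected
  refine hf.eqOn_of_preconnected_of_frequently_eq hg hpre (z₀ := ((1 : ℝ) : ℂ)) (by simp) ?_ hy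
  have ht : Tendsto (fun x : ℝ => (x : ℂ)) (𝓝[>] 1) (𝓝[≠] ((1 : ℝ) : ℂ)) := by
    apply tendsto_nhdsWithin_of_tendsto_nhds_of_eventually_within
    · exact (Complex.continuous_ofReal.tendsto 1).mono_left nhdsWithin_le_nhds
    · filter_upwards [self_mem_nhdsWithin] with x hx
      simpa using (ne_of_gt hx)
  refine ht.frequently (Eventually.frequently ?_)
  filter_upwards [self_mem_nhdsWithin] with x hx
  have hx0 : 0 < x := lt_trans one_pos hx
  have := Complex.integral_cpow_mul_exp_neg_mul_Ioi hs hx0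
  rw [this, one_div, Complex.inv_cpow _ _ (by
    rw [Complex.arg_ofReal_of_nonneg hx0.le]; exact Real.pi_pos.ne), Complex.cpow_neg, mul_comm]

lemma aux_bound {s y : ℂ} (hs : 0 < s.re) (hy : 0 < y.re) :
    ‖Complex.Gamma s * y ^ (-s)‖ ≤
      ∫ t : ℝ in Set.Ioi 0, t ^ (s.re - 1) * Real.exp (-y.re * t) := by
  rw [← aux_mellin hs hy]
  refine (norm_integral_le_integral_norm _).trans (le_of_eq ?_)
  exact setIntegral_congr_fun measurableSet_Ioi fun t ht => aux_norm ht

lemma aux_vert {y : ℂ} (hy : 0 < y.re) {c : ℝ} (hc : 1 < c) :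
    Integrable (fun t : ℝ => Complex.Gamma ((c : ℂ) + (t : ℂ) * Complex.I)
      * y ^ (-((c : ℂ) + (t : ℂ) * Complex.I))) := by
  have hy0 : y ≠ 0 := by rintro rfl; simp at hy
  set C := ∫ t : ℝ in Set.Ioi 0, t ^ (c + 2 - 1) * Real.exp (-y.re * t) with hC
  refine (integrable_inv_one_add_sq.const_mul (C * ‖y‖ ^ 2)).mono' ?_ ?_
  · apply Continuous.aestronglyMeasurable
    apply Continuous.mul
    · rw [continuous_iff_continuousAt]
      intro t
      refine ContinuousAt.comp (f := fun t : ℝ => (c : ℂ) + (t : ℂ) * Complex.I)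
        (Complex.differentiableAt_Gamma _ fun m hm => ?_).continuousAt (by fun_prop)
      have := congrArg Complex.re hm
      simp at this
      have h2 : (0 : ℝ) ≤ m := Nat.cast_nonneg m
      linarith
    · exact Continuous.const_cpow (by fun_prop) (Or.inl hy0)
  · refine Eventually.of_forall fun t => ?_
    set s : ℂ := (c : ℂ) + (t : ℂ) * Complex.I with hs
    have hre : s.re = c := by simp [hs]
    have him : s.im = t := by simp [hs]
    have hs0 : s ≠ 0 := by intro h; rw [h] at hre; simp at hre; linarith
    have hs1 : s + 1 ≠ 0 := by
      intro h; have := congrArg Complex.re h; simp [hre] at this; linarith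
    have hb := aux_bound (s := s + 2) (y := y) (by simp [hre]; linarith) hy
    have hre2 : (s + 2).re = c + 2 := by simp [hre]
    rw [hre2, ← hC] at hb
    have hG : Complex.Gamma (s + 2) = (s + 1) * (s * Complex.Gamma s) := by
      rw [show s + 2 = (s + 1) + 1 by ring, Complex.Gamma_add_one _ hs1, Complex.Gamma_add_one _ hs0]
    have hyp : y ^ (-s) = y ^ (-(s + 2)) * y ^ 2 := by
      rw [← Complex.cpow_natCast, ← Complex.cpow_add _ _ hy0]
      congr 1
      push_cast
      ring
    have hE : (s * (s + 1)) * (Complex.Gamma s * y ^ (-s)) =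
        Complex.Gamma (s + 2) * y ^ (-(s + 2)) * y ^ 2 := by
      rw [hG, hyp]; ring
    have hN : 1 + t ^ 2 ≤ ‖s * (s + 1)‖ := by
      have h1 : 1 + t ^ 2 ≤ ‖s‖ ^ 2 := by
        rw [← Complex.normSq_eq_norm_sq, Complex.normSq_apply, hre, him]; nlinarith
      have h2 : ‖s‖ ≤ ‖s + 1‖ := by
        refine (sq_le_sq₀ (norm_nonneg _) (norm_nonneg _)).1 ?_
        rw [← Complex.normSq_eq_norm_sq, ← Complex.normSq_eq_norm_sq, Complex.normSq_apply,
          Complex.normSq_apply]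
        simp only [Complex.add_re, Complex.add_im, Complex.one_re, Complex.one_im, hre, him]
        nlinarith
      rw [norm_mul]; nlinarith [norm_nonneg s]
    have hpos : 0 < 1 + t ^ 2 := by positivity
    have hE2 := congrArg norm hE
    rw [norm_mul, norm_mul _ (y ^ 2), norm_pow] at hE2
    rw [← div_eq_mul_inv, le_div_iff₀ hpos]
    calc _ ≤ ‖Complex.Gamma s * y ^ (-s)‖ * ‖s * (s + 1)‖ := by gcongr
      _ = ‖Complex.Gamma (s + 2) * y ^ (-(s + 2))‖ * ‖y‖ ^ 2 := by rw [mul_comm, hE2]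
      _ ≤ _ := by gcongr

lemma aux_inv {y : ℂ} (hy : 0 < y.re) {c : ℝ} (hc : 1 < c) {n : ℕ} (hn : n ≠ 0) :
    (1 / (2 * (Real.pi : ℂ))) * ∫ t : ℝ, (n : ℂ) ^ (-((c : ℂ) + (t : ℂ) * Complex.I)) *
      (Complex.Gamma ((c : ℂ) + (t : ℂ) * Complex.I)
      * y ^ (-((c : ℂ) + (t : ℂ) * Complex.I))) = Complex.exp (-(n : ℂ) * y) := by
  have hm : ∀ t : ℝ, mellin (fun x : ℝ => Complex.exp (-(y * x)))
      ((c : ℂ) + (t : ℂ) * Complex.I) = Complex.Gamma ((c : ℂ) + (t : ℂ) * Complex.I)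
      * y ^ (-((c : ℂ) + (t : ℂ) * Complex.I)) := fun t =>
    aux_mellin (by simp; linarith) hy
  have h := mellinInv_mellin_eq c (fun x : ℝ => Complex.exp (-(y * x))) (x := (n : ℝ))
    (by positivity) (aux_int (by simp; linarith) hy) ?_ (by fun_prop)
  · simp only [mellinInv, hm, smul_eq_mul] at h
    rw [Complex.real_smul] at h
    push_cast at h
    rw [h]
    congr 1; ring
  · simpa only [Complex.VerticalIntegrable, hm] using aux_vert hy hc

lemma aux_zeta {s : ℂ} (hs : 1 < s.re) :
    LSeriesHasSum (LSeries.logMul (LSeries.convolution 1 1)) s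
      (-2 * (riemannZeta s * deriv riemannZeta s)) := by
  have hab : LSeries.abscissaOfAbsConv (LSeries.convolution 1 1) < s.re := by
    refine (LSeries.abscissaOfAbsConv_convolution_le _ _).trans_lt ?_
    rw [LSeries.abscissaOfAbsConv_one, max_self]
    exact_mod_cast hs
  have h1 := LSeries_deriv hab
  have hev : LSeries (LSeries.convolution 1 1) =ᶠ[𝓝 s] fun z => riemannZeta z * riemannZeta z := by
    filter_upwards [(isOpen_lt continuous_const Complex.continuous_re).mem_nhds hs] with z hz
    have hz1 : LSeriesSummable 1 z := LSeriesSummable_one_iff.2 hz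
    rw [LSeries_convolution' hz1 hz1, LSeries_one_eq_riemannZeta hz]
  have hd : DifferentiableAt ℂ riemannZeta s :=
    differentiableAt_riemannZeta (by rintro rfl; simp at hs)
  rw [hev.deriv_eq, deriv_fun_mul hd hd] at h1
  have h2 := (LSeriesSummable_logMul_of_lt_re hab).LSeriesHasSum
  convert h2 using 1
  linear_combination -h1

lemma aux_coeff (n : ℕ) : LSeries.convolution (1 : ℕ → ℂ) 1 n = (n.divisors.card : ℂ) := by
  rw [LSeries.convolution_def]
  simp [← Nat.map_div_right_divisors]

theorem stmt17 (y : ℂ) (hy : 0 < y.re) (c : ℝ) (hc : 1 < c) :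
    ∑' n : ℕ, (((n + 1).divisors.card : ℂ) * (Real.log ((n : ℝ) + 1) : ℂ)
        * Complex.exp (-((n : ℂ) + 1) * y)) =
      -2 * ((1 / (2 * (Real.pi : ℂ))) * ∫ t : ℝ,
        Complex.Gamma ((c : ℂ) + (t : ℂ) * Complex.I)
          * riemannZeta ((c : ℂ) + (t : ℂ) * Complex.I)
          * deriv riemannZeta ((c : ℂ) + (t : ℂ) * Complex.I)
          * y ^ (-((c : ℂ) + (t : ℂ) * Complex.I))) := by
  set a : ℕ → ℂ := LSeries.logMul (LSeries.convolution 1 1) with ha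
  have ha0 : a 0 = 0 := by simp [ha, LSeries.logMul]
  set G : ℝ → ℂ := fun t => Complex.Gamma ((c : ℂ) + (t : ℂ) * Complex.I)
      * y ^ (-((c : ℂ) + (t : ℂ) * Complex.I)) with hG
  have hGi : Integrable G := aux_vert hy hc
  have hterm : ∀ (n : ℕ) (s : ℂ), LSeries.term a s n = a n * (n : ℂ) ^ (-s) := by
    intro n s
    rcases eq_or_ne n 0 with rfl | hn
    · simp [ha0]
    · rw [LSeries.term_of_ne_zero hn, Complex.cpow_neg, div_eq_mul_inv]
  have hs : ∀ t : ℝ, 1 < ((c : ℂ) + (t : ℂ) * Complex.I).re := fun t => by simpa using hc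
  set F : ℕ → ℝ → ℂ := fun n t => LSeries.term a ((c : ℂ) + (t : ℂ) * Complex.I) n * G t with hF
  have hnorm : ∀ n t, ‖F n t‖ = ‖LSeries.term a (c : ℂ) n‖ * ‖G t‖ := by
    intro n t
    simp only [hF, norm_mul]
    rw [LSeries.norm_term_eq, LSeries.norm_term_eq]
    simp
  have hFi : ∀ n, Integrable (F n) := by
    intro n
    refine (hGi.norm.const_mul ‖LSeries.term a (c : ℂ) n‖).mono' ?_
      (Eventually.of_forall fun t => (hnorm n t).le)
    refine AEStronglyMeasurable.mul ?_ hGi.aestronglyMeasurable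
    apply Continuous.aestronglyMeasurable
    rcases eq_or_ne n 0 with rfl | hn
    · simp only [LSeries.term_zero]; fun_prop
    · simp only [hterm]
      exact continuous_const.mul
        (Continuous.const_cpow (by fun_prop) (Or.inl (by exact_mod_cast hn)))
  have hsum : Summable fun n => ∫ t, ‖F n t‖ := by
    simp only [hnorm, integral_const_mul]
    apply Summable.mul_right
    have := (aux_zeta (s := (c : ℂ)) (by simpa using hc)).summable
    exact this.norm
  have key := hasSum_integral_of_summable_integral_norm hFi hsum
  have hR : ∀ t : ℝ, ∑' n, F n t = -2 * (Complex.Gamma ((c : ℂ) + (t : ℂ) * Complex.I)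
          * riemannZeta ((c : ℂ) + (t : ℂ) * Complex.I)
          * deriv riemannZeta ((c : ℂ) + (t : ℂ) * Complex.I)
          * y ^ (-((c : ℂ) + (t : ℂ) * Complex.I))) := by
    intro t
    simp only [hF]
    rw [tsum_mul_right]
    have h := (aux_zeta (hs t)).tsum_eq
    rw [← ha] at h
    rw [h, hG]
    ring
  simp only [hR] at key
  rw [integral_const_mul] at key
  have key2 := key.mul_left (1 / (2 * (Real.pi : ℂ)))
  have hL : ∀ n, 1 / (2 * (Real.pi : ℂ)) * ∫ t, F n t = a n * Complex.exp (-(n : ℂ) * y) := by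
    intro n
    rcases eq_or_ne n 0 with rfl | hn
    · simp [hF, ha0]
    · rw [← aux_inv hy hc hn]
      simp only [hF, hterm, mul_assoc]
      rw [integral_const_mul]
      ring
  simp only [hL] at key2
  rw [← hasSum_nat_add_iff' 1] at key2
  simp only [Finset.sum_range_one, ha0, zero_mul, sub_zero] at key2
  have h3 := key2.tsum_eq
  rw [mul_left_comm, ← h3]
  refine tsum_congr fun n => ?_
  rw [ha, LSeries.logMul, aux_coeff]
  push_cast
  rw [Complex.ofReal_log (by positivity)]
  push_cast
  ring
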